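/- arXiv:1310.4882 — 3 statements merged into one kernel-verified Lean document; each statement's English description precedes it below -/
import Mathlib

section
/- Let G be a group with a δ-hyperbolic length function l : G → ℤ, and let δ₁ ∈ ℤ with δ₁ > δ. Define l_H : G × G → ℤ² (ℤ² taken with the right lexicographic order) by l_H(f,g) = (l(f), l(g)). Then l_H is a length function on H = G × G, i.e. l_H(1,1) = 0, l_H(h) ≥ 0, l_H(h⁻¹) = l_H(h), l_H(h₁h₂) ≤ l_H(h₁) + l_H(h₂), and l_H is δ_H-hyperbolic for δ_H = (δ₁, δ₁): C_H(h₁,h₂) ≥ min(C_H(h₁,h₃), C_H(h₂,h₃)) − 2δ_H for all h₁,h₂,h₃ ∈ H, where C_H(a,b) = l_H(a) + l_H(b) − l_H(a⁻¹b). -/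
/-- Let `l : G → ℤ` be a `δ`-hyperbolic length function and `δ₁ > δ`. On `H = G × G` define
`l_H(f,g) = (l f, l g) ∈ ℤ²` with the right lexicographic order (realized as
`Lex (ℤ × ℤ)` via `(a,b) ↦ toLex (b,a)`, so the second component is compared first).
Then `l_H` is a length function on `H` and it is `δ_H`-hyperbolic for
`δ_H = (δ₁, δ₁)`: `C_H(h₁,h₂) ≥ min (C_H(h₁,h₃)) (C_H(h₂,h₃)) - 2δ_H`, where
`C_H(a,b) = l_H a + l_H b - l_H (a⁻¹ b)` is twice the Gromov product. -/
theorem product_length_function_hyperbolic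
    {G : Type*} [Group G] (l : G → ℤ) (δ : ℤ) (hδ : 0 ≤ δ)
    (l_one : l 1 = 0) (l_nonneg : ∀ g : G, 0 ≤ l g)
    (l_inv : ∀ g : G, l g⁻¹ = l g)
    (l_mul : ∀ g h : G, l (g * h) ≤ l g + l h)
    (l_hyp : ∀ f g h : G,
      l f + l g - l (f⁻¹ * g) ≥
        min (l f + l h - l (f⁻¹ * h)) (l g + l h - l (g⁻¹ * h)) - 2 * δ)
    (δ₁ : ℤ) (hδ₁ : δ < δ₁) :
    let lH : G × G → Lex (ℤ × ℤ) := fun p => toLex (l p.2, l p.1)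
    let δH : Lex (ℤ × ℤ) := toLex (δ₁, δ₁)
    (lH (1, 1) = 0) ∧
    (∀ h : G × G, 0 ≤ lH h) ∧
    (∀ h : G × G, lH h⁻¹ = lH h) ∧
    (∀ h₁ h₂ : G × G, lH (h₁ * h₂) ≤ lH h₁ + lH h₂) ∧
    (∀ h₁ h₂ h₃ : G × G,
      lH h₁ + lH h₂ - lH (h₁⁻¹ * h₂) ≥
        min (lH h₁ + lH h₃ - lH (h₁⁻¹ * h₃)) (lH h₂ + lH h₃ - lH (h₂⁻¹ * h₃))
          - 2 • δH) := by
  intro lH δH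
  refine ⟨?_, ?_, ?_, ?_, ?_⟩
  · simp only [lH, l_one]
    rfl
  · intro h
    rw [Prod.Lex.le_iff]
    change 0 < l h.2 ∨ 0 = l h.2 ∧ 0 ≤ l h.1
    have h1 := l_nonneg h.1
    have h2 := l_nonneg h.2
    omega
  · intro h
    simp only [lH, Prod.fst_inv, Prod.snd_inv, l_inv]
  · intro h k
    rw [Prod.Lex.le_iff]
    change l (h.2 * k.2) < l h.2 + l k.2 ∨
      l (h.2 * k.2) = l h.2 + l k.2 ∧ l (h.1 * k.1) ≤ l h.1 + l k.1
    have h1 := l_mul h.1 k.1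
    have h2 := l_mul h.2 k.2
    omega
  · intro f g h
    have key := l_hyp f.2 g.2 h.2
    rw [ge_iff_le, sub_le_iff_le_add, min_le_iff, two_nsmul, Prod.Lex.le_iff, Prod.Lex.le_iff]
    have e : min (l f.2 + l h.2 - l (f.2⁻¹ * h.2)) (l g.2 + l h.2 - l (g.2⁻¹ * h.2)) <
        l f.2 + l g.2 - l (f.2⁻¹ * g.2) + (δ₁ + δ₁) := by omega
    rcases min_lt_iff.mp e with e | e
    · exact Or.inl (Or.inl e)
    · exact Or.inr (Or.inl e)
end

section
/- Let l : G → ℤ be a complete length function on a group G (axioms (Λ1)–(Λ3) and (C)), and let S = {g ∈ G | l(g) ≤ 1}. Then S generates G; more precisely: (i) every g ∈ G is the product of a list of at most max(l(g), 1) elements of S, and (ii) if g is the product of a list of n elements of S, then l(g) ≤ n. (This is the core of the characterization: a group G is δ-hyperbolic if and only if it admits a complete δ-hyperbolic length function l : G → ℤ with {g ∈ G | l(g) ≤ 1} finite, l then being the word length with respect to the finite generating set S.) -/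
/-- Let `l : G → ℤ` be a complete length function and `S = {g | l g ≤ 1}`. Then `S`
generates `G`: (i) every `g ∈ G` is a product of a list of at most `max (l g) 1` elements
of `S`, and (ii) if `g` is the product of a list of `n` elements of `S`, then `l g ≤ n`.
(This is the core of: `G` is `δ`-hyperbolic iff it has a complete `δ`-hyperbolic length
function `l : G → ℤ` with `{g | l g ≤ 1}` finite, `l` being the word length w.r.t. `S`.) -/
theorem complete_length_function_word_length
    {G : Type*} [Group G] (l : G → ℤ)
    (l_one : l 1 = 0) (l_nonneg : ∀ g : G, 0 ≤ l g)
    (l_inv : ∀ g : G, l g⁻¹ = l g)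
    (l_mul : ∀ g h : G, l (g * h) ≤ l g + l h)
    (complete : ∀ g : G, ∀ α : ℤ, 0 ≤ α → α ≤ l g →
      ∃ u : G, l u = α ∧ l g = l u + l (u⁻¹ * g)) :
    (∀ g : G, ∃ L : List G,
      (∀ s ∈ L, l s ≤ 1) ∧ L.prod = g ∧ (L.length : ℤ) ≤ max (l g) 1) ∧
    (∀ L : List G, (∀ s ∈ L, l s ≤ 1) → l L.prod ≤ (L.length : ℤ)) := by
  constructor
  · have key : ∀ n : ℕ, ∀ g : G, l g ≤ n + 1 → ∃ L : List G,
        (∀ s ∈ L, l s ≤ 1) ∧ L.prod = g ∧ (L.length : ℤ) ≤ max (l g) 1 := by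
      intro n
      induction n with
      | zero =>
        intro g hg
        exact ⟨[g], by simpa using hg, by simp, by simp⟩
      | succ k ih =>
        intro g hg
        by_cases h1 : l g ≤ 1
        · exact ⟨[g], by simpa using h1, by simp, by simp⟩
        · obtain ⟨u, hu, hgu⟩ := complete g 1 (by norm_num) (by omega)
          obtain ⟨L, hL, hp, hlen⟩ := ih (u⁻¹ * g) (by push_cast at hg; omega)
          refine ⟨u :: L, ?_, ?_, ?_⟩
          · intro s hs
            rcases List.mem_cons.mp hs with rfl | hs
            · exact hu.le
            · exact hL s hs
          · rw [List.prod_cons, hp, mul_inv_cancel_left]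
          · rw [List.length_cons]
            push_cast
            omega
    intro g
    refine key (l g).toNat g ?_
    have := l_nonneg g
    omega
  · intro L
    induction L with
    | nil => intro _; simp [l_one]
    | cons a L ih =>
      intro h
      have h1 := h a (by simp)
      have h2 := ih (fun s hs => h s (by simp [hs]))
      have h3 := l_mul a L.prod
      rw [List.prod_cons, List.length_cons]
      push_cast
      omega
end

section
/- Let δ and n be natural numbers with δ ≥ 1. Consider the step relation on finite multisets of natural numbers in which a multiset M + {k} steps to M + {k₁, k₂} whenever k > 2δ, k₁ < k, k₂ < k, and k ≤ k₁ + k₂ ≤ k + 2δ. Then every multiset obtainable from the singleton multiset {n} by finitely many such steps (i.e. in the reflexive-transitive closure of the step relation) has sum at most 4δn. In particular, the maximal total τ(n) obtained by repeatedly splitting n until all parts are at most 2δ satisfies τ(n) ≤ 4δn. -/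
/-- The splitting step: a multiset `k ::ₘ M` with `k > 2δ` steps to `k₁ ::ₘ k₂ ::ₘ M`
where `k₁, k₂ < k` and `k ≤ k₁ + k₂ ≤ k + 2δ`. -/
def SplitStep (δ : ℕ) (M₁ M₂ : Multiset ℕ) : Prop :=
  ∃ (k k₁ k₂ : ℕ) (M : Multiset ℕ),
    M₁ = k ::ₘ M ∧ M₂ = k₁ ::ₘ k₂ ::ₘ M ∧
    2 * δ < k ∧ k₁ < k ∧ k₂ < k ∧ k ≤ k₁ + k₂ ∧ k₁ + k₂ ≤ k + 2 * δ

/-- Potential function bounding the total obtainable from `k`. -/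
def splitPot (δ k : ℕ) : ℕ := if k ≤ 2 * δ then k else 4 * δ * (k - 2 * δ)

theorem splitPot_split (δ k a b : ℕ) (hk : 2 * δ < k) (ha : a < k) (hb : b < k)
    (h : a + b ≤ k + 2 * δ) : splitPot δ a + splitPot δ b ≤ splitPot δ k := by
  unfold splitPot
  obtain ⟨j, rfl⟩ := Nat.exists_eq_add_of_lt hk
  rw [if_neg (by omega : ¬ 2 * δ + j + 1 ≤ 2 * δ)]
  have e : 2 * δ + j + 1 - 2 * δ = j + 1 := by omega
  rw [e]
  split_ifs with h1 h2 h2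
  · nlinarith [Nat.zero_le (δ * j)]
  · have : 4 * δ * (b - 2 * δ) ≤ 4 * δ * j := Nat.mul_le_mul_left _ (by omega)
    nlinarith
  · have : 4 * δ * (a - 2 * δ) ≤ 4 * δ * j := Nat.mul_le_mul_left _ (by omega)
    nlinarith
  · rw [← Nat.mul_add]
    exact Nat.mul_le_mul_left _ (by omega)

theorem le_splitPot (δ k : ℕ) (hδ : 1 ≤ δ) : k ≤ splitPot δ k := by
  unfold splitPot
  split_ifs with h
  · exact le_rfl
  · obtain ⟨j, rfl⟩ := Nat.exists_eq_add_of_lt (not_le.mp h)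
    have e : 2 * δ + j + 1 - 2 * δ = j + 1 := by omega
    rw [e]
    nlinarith [Nat.mul_le_mul_right j hδ]

theorem splitPot_le (δ k : ℕ) (hδ : 1 ≤ δ) : splitPot δ k ≤ 4 * δ * k := by
  unfold splitPot
  split_ifs with h
  · nlinarith [Nat.mul_le_mul_right k hδ]
  · exact Nat.mul_le_mul_left _ (Nat.sub_le _ _)

/-- Let `δ ≥ 1` and `n` be natural numbers. Every multiset obtainable from the singleton
`{n}` by finitely many splitting steps has sum at most `4δn`. In particular the maximal
total `τ(n)` obtained by repeatedly splitting `n` until all parts are at most `2δ`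
satisfies `τ(n) ≤ 4δn`. -/
theorem splitSum_le (δ n : ℕ) (hδ : 1 ≤ δ) :
    ∀ M : Multiset ℕ, Relation.ReflTransGen (SplitStep δ) {n} M →
      M.sum ≤ 4 * δ * n := by
  intro M hM
  have key : (M.map (splitPot δ)).sum ≤ splitPot δ n := by
    induction hM with
    | refl => simp
    | tail _ hs ih =>
      obtain ⟨k, a, b, N, rfl, rfl, hk, ha, hb, _, hab⟩ := hs
      have := splitPot_split δ k a b hk ha hb hab
      simp only [Multiset.map_cons, Multiset.sum_cons] at ih ⊢
      omega
  have h1 : M.sum ≤ (M.map (splitPot δ)).sum := by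
    have := Multiset.sum_map_le_sum_map (s := M) id (splitPot δ)
      (fun k _ => le_splitPot δ k hδ)
    simpa using this
  exact h1.trans (key.trans (splitPot_le δ n hδ))
end
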